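/- The softmax-parameterized value function is 48N²/(1−γ)³-smooth: for all parameters θ, θ' and every state s ∈ S, |V^{π_θ}(s) − V^{π_{θ'}}(s) − ⟨∇_θ V^{π_θ}(s), θ − θ'⟩| ≤ (24N²/(1−γ)³)·‖θ − θ'‖₂². -/

import Mathlib

open Finset MeasureTheory
open scoped BigOperators Classical

noncomputable section

/-- Softmax policy with parameter `θ`. -/
def softmaxPol {S A : Type*} [Fintype A] (θ : S → A → ℝ) (s : S) (a : A) : ℝ :=
  Real.exp (θ s a) / ∑ a' : A, Real.exp (θ s a')

/-- Global product softmax policy. -/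
def gPolicy {N : ℕ} {S A : Fin N → Type*} [∀ n, Fintype (A n)]
    (θ : ∀ n, S n → A n → ℝ) (s : ∀ n, S n) (a : ∀ n, A n) : ℝ :=
  ∏ n, softmaxPol (θ n) (s n) (a n)

/-- Global product transition kernel. -/
def gKernel {N : ℕ} {S A : Fin N → Type*} (P : ∀ n, S n → A n → S n → ℝ)
    (s : ∀ n, S n) (a : ∀ n, A n) (s' : ∀ n, S n) : ℝ :=
  ∏ n, P n (s n) (a n) (s' n)

/-- Distribution of the state at time `t` under kernel `K`, policy `p`,
initial state distribution `ρ`. -/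
def stateDist {GS GA : Type*} [Fintype GS] [Fintype GA]
    (K : GS → GA → GS → ℝ) (p : GS → GA → ℝ) (ρ : GS → ℝ) : ℕ → GS → ℝ
  | 0 => ρ
  | t + 1 => fun s' => ∑ s : GS, ∑ a : GA, stateDist K p ρ t s * p s a * K s a s'

/-- Expected reward at time `t`. -/
def expReward {GS GA : Type*} [Fintype GS] [Fintype GA]
    (K : GS → GA → GS → ℝ) (p : GS → GA → ℝ) (R : GS → GA → ℝ) (ρ : GS → ℝ) (t : ℕ) : ℝ :=
  ∑ s : GS, ∑ a : GA, stateDist K p ρ t s * p s a * R s a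

/-- Expected discounted reward with initial state distribution `ρ`:
`V^p(ρ) = E[∑_t γ^t R(s(t),a(t)) | s(0) ∼ ρ]`. -/
def valueD {GS GA : Type*} [Fintype GS] [Fintype GA] (γ : ℝ)
    (K : GS → GA → GS → ℝ) (p : GS → GA → ℝ) (R : GS → GA → ℝ) (ρ : GS → ℝ) : ℝ :=
  ∑' t : ℕ, γ ^ t * expReward K p R ρ t

/-- Point mass at `s0`. -/
def diracD {GS : Type*} (s0 : GS) : GS → ℝ := fun s => if s = s0 then 1 else 0

/-- State value function `V^p(s)`. -/
def valueV {GS GA : Type*} [Fintype GS] [Fintype GA] (γ : ℝ)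
    (K : GS → GA → GS → ℝ) (p : GS → GA → ℝ) (R : GS → GA → ℝ) (s0 : GS) : ℝ :=
  valueD γ K p R (diracD s0)

/-- State-action value function `Q^p(s,a) = R(s,a) + γ E_{s' ∼ K(⬝|s,a)}[V^p(s')]`. -/
def valueQ {GS GA : Type*} [Fintype GS] [Fintype GA] (γ : ℝ)
    (K : GS → GA → GS → ℝ) (p : GS → GA → ℝ) (R : GS → GA → ℝ) (s0 : GS) (a0 : GA) : ℝ :=
  R s0 a0 + γ * ∑ s' : GS, K s0 a0 s' * valueV γ K p R s'

/-- Discounted state occupancy measure `d_ρ^p(s)`. -/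
def occup {GS GA : Type*} [Fintype GS] [Fintype GA] (γ : ℝ)
    (K : GS → GA → GS → ℝ) (p : GS → GA → ℝ) (ρ : GS → ℝ) (s : GS) : ℝ :=
  (1 - γ) * ∑' t : ℕ, γ ^ t * stateDist K p ρ t s

/-- Deterministic policy associated with an action-selection map. -/
def detPol {GS GA : Type*} (f : GS → GA) : GS → GA → ℝ :=
  fun s a => if a = f s then 1 else 0

/-- Squared Euclidean norm of a multi-agent parameter vector. -/
def sqNorm {N : ℕ} {S A : Fin N → Type*} [∀ n, Fintype (S n)] [∀ n, Fintype (A n)]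
    (ν : ∀ n, S n → A n → ℝ) : ℝ :=
  ∑ n, ∑ s, ∑ a, (ν n s a) ^ 2

/-- Euclidean norm of a multi-agent parameter vector. -/
def eucNorm {N : ℕ} {S A : Fin N → Type*} [∀ n, Fintype (S n)] [∀ n, Fintype (A n)]
    (ν : ∀ n, S n → A n → ℝ) : ℝ :=
  Real.sqrt (sqNorm ν)

end

/-!
A product of softmax policies is the softmax policy of the joint logits `∑ₙ θₙ(sₙ, aₙ)`, so it
suffices to treat one agent and to compose with a linear map. For one agent, the performance
difference lemma says that `V^{p'} - V^p` is the value under `p'` of the reward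
`s ↦ ⟨p'(s) - p(s), Q^p(s)⟩`. Replacing this reward by its linearization, the covariance of the
logit increment and `Q^p(s)` under `p(s)`, costs `O(‖u‖²)`; replacing the outer policy `p'` by `p`
costs `O(‖u‖)` on a reward of size `O(‖u‖)`, again by the performance difference lemma.
-/

open scoped Matrix

theorem hasFDerivAt_of_norm_sub_le_sq {𝕜 E F : Type*} [NontriviallyNormedField 𝕜]
    [NormedAddCommGroup E] [NormedSpace 𝕜 E] [NormedAddCommGroup F] [NormedSpace 𝕜 F]
    {f : E → F} {L : E →L[𝕜] F} {x : E} {C : ℝ}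
    (h : ∀ y, ‖f y - f x - L (y - x)‖ ≤ C * ‖y - x‖ ^ 2) : HasFDerivAt f L x := by
  have hO : (fun y => f y - f x - L (y - x)) =O[nhds x] fun y => ‖y - x‖ ^ 2 :=
    .of_bound C (.of_forall fun y => by simpa only [norm_pow, norm_norm] using h y)
  exact .of_isLittleO (hO.trans_isLittleO (Asymptotics.isLittleO_pow_sub_sub x one_lt_two))

section Averaging

variable {ι : Type*} [Fintype ι]

theorem abs_dotProduct_le_norm {p : ι → ℝ} (hp : p ∈ stdSimplex ℝ ι) (g : ι → ℝ) :
    |p ⬝ᵥ g| ≤ ‖g‖ :=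
  calc |p ⬝ᵥ g| ≤ ∑ i, |p i * g i| := abs_sum_le_sum_abs _ _
    _ ≤ ∑ i, p i * ‖g‖ := sum_le_sum fun i _ => by
        rw [abs_mul, abs_of_nonneg (hp.1 i)]
        exact mul_le_mul_of_nonneg_left (norm_le_pi_norm g i) (hp.1 i)
    _ = ‖g‖ := by rw [← sum_mul, hp.2, one_mul]

theorem norm_mulVec_le_of_mem_rowStochastic {M : Matrix ι ι ℝ}
    (hM : M ∈ Matrix.rowStochastic ℝ ι) (f : ι → ℝ) : ‖M *ᵥ f‖ ≤ ‖f‖ :=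
  (pi_norm_le_iff_of_nonneg (norm_nonneg f)).2 fun i =>
    abs_dotProduct_le_norm ⟨fun _ => Matrix.nonneg_of_mem_rowStochastic hM,
      Matrix.sum_row_of_mem_rowStochastic hM i⟩ f

/-- Covariance of `f` and `g` under the weights `p`. -/
noncomputable def weightedCov (p f g : ι → ℝ) : ℝ := p ⬝ᵥ (f * g) - (p ⬝ᵥ f) * (p ⬝ᵥ g)

theorem isLinearMap_weightedCov (p g : ι → ℝ) : IsLinearMap ℝ fun f => weightedCov p f g where
  map_add f₁ f₂ := by simp only [weightedCov, add_mul, dotProduct_add]; ring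
  map_smul c f := by simp only [weightedCov, smul_mul_assoc, dotProduct_smul, smul_eq_mul]; ring

theorem abs_weightedCov_le {p : ι → ℝ} (hp : p ∈ stdSimplex ℝ ι) (f g : ι → ℝ) :
    |weightedCov p f g| ≤ 2 * ‖f‖ * ‖g‖ :=
  calc |weightedCov p f g|
      ≤ |p ⬝ᵥ (f * g)| + |p ⬝ᵥ f| * |p ⬝ᵥ g| := by
        rw [← abs_mul]
        exact abs_sub _ _
    _ ≤ ‖f‖ * ‖g‖ + ‖f‖ * ‖g‖ := by
        gcongr
        · exact (abs_dotProduct_le_norm hp _).trans (norm_mul_le f g)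
        · exact abs_dotProduct_le_norm hp f
        · exact abs_dotProduct_le_norm hp g
    _ = 2 * ‖f‖ * ‖g‖ := by ring

theorem abs_weightedCov_sub_weightedCov_le {p q : ι → ℝ} (hp : p ∈ stdSimplex ℝ ι)
    (hq : q ∈ stdSimplex ℝ ι) {e : ℝ} (he : 0 ≤ e) (hqp : ∀ g, |(q - p) ⬝ᵥ g| ≤ e * ‖g‖)
    (f g : ι → ℝ) :
    |weightedCov q f g - weightedCov p f g| ≤ 3 * e * ‖f‖ * ‖g‖ := by
  have hsplit : weightedCov q f g - weightedCov p f g =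
      (q - p) ⬝ᵥ (f * g) - ((q ⬝ᵥ f) * ((q - p) ⬝ᵥ g) + ((q - p) ⬝ᵥ f) * (p ⬝ᵥ g)) := by
    simp only [weightedCov, sub_dotProduct]
    ring
  calc |weightedCov q f g - weightedCov p f g|
      ≤ |(q - p) ⬝ᵥ (f * g)| + (|q ⬝ᵥ f| * |(q - p) ⬝ᵥ g| + |(q - p) ⬝ᵥ f| * |p ⬝ᵥ g|) := by
        rw [hsplit, ← abs_mul, ← abs_mul]
        exact (abs_sub _ _).trans (add_le_add_right (abs_add_le _ _) _)
    _ ≤ e * (‖f‖ * ‖g‖) + (‖f‖ * (e * ‖g‖) + e * ‖f‖ * ‖g‖) := by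
        gcongr
        · exact (hqp _).trans (mul_le_mul_of_nonneg_left (norm_mul_le f g) he)
        · exact abs_dotProduct_le_norm hq f
        · exact hqp g
        · exact hqp f
        · exact abs_dotProduct_le_norm hp g
    _ = 3 * e * ‖f‖ * ‖g‖ := by ring

end Averaging

section MarkovDecisionProcess

variable {GS GA : Type*} [Fintype GS] [Fintype GA]

/-- State transition matrix of the Markov chain obtained by playing the policy `p`. -/
noncomputable def policyMatrix (K : GS → GA → GS → ℝ) (p : GS → GA → ℝ) : Matrix GS GS ℝ :=
  Matrix.of fun s s' => ∑ a, p s a * K s a s'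

/-- Expected one-step reward of the policy `p`, as a function of the state. -/
noncomputable def policyReward {S : Type*} (p R : S → GA → ℝ) (s : S) : ℝ := p s ⬝ᵥ R s

variable {K : GS → GA → GS → ℝ} {p p' : GS → GA → ℝ} {γ : ℝ}

theorem policyMatrix_mulVec (K : GS → GA → GS → ℝ) (p : GS → GA → ℝ) (f : GS → ℝ) (s : GS) :
    (policyMatrix K p *ᵥ f) s = p s ⬝ᵥ fun a => K s a ⬝ᵥ f := by
  simp only [policyMatrix, Matrix.mulVec, dotProduct, Matrix.of_apply, sum_mul, mul_sum, mul_assoc]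
  exact sum_comm

theorem policyMatrix_mem_rowStochastic (hK : ∀ s a, K s a ∈ stdSimplex ℝ GS)
    (hp : ∀ s, p s ∈ stdSimplex ℝ GA) : policyMatrix K p ∈ Matrix.rowStochastic ℝ GS := by
  refine ⟨fun s s' => sum_nonneg fun a _ => mul_nonneg ((hp s).1 a) ((hK s a).1 s'), ?_⟩
  ext s
  simp only [policyMatrix_mulVec, dotProduct_one, (hK s _).2, Pi.one_apply]
  exact (dotProduct_one (p s)).trans (hp s).2

theorem norm_policyReward_le (hp : ∀ s, p s ∈ stdSimplex ℝ GA) (R : GS → GA → ℝ) :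
    ‖policyReward p R‖ ≤ ‖R‖ :=
  (pi_norm_le_iff_of_nonneg (norm_nonneg R)).2 fun s =>
    (abs_dotProduct_le_norm (hp s) (R s)).trans (norm_le_pi_norm R s)

theorem stateDist_eq_vecMul (K : GS → GA → GS → ℝ) (p : GS → GA → ℝ) (ρ : GS → ℝ) (t : ℕ) :
    stateDist K p ρ t = ρ ᵥ* policyMatrix K p ^ t := by
  induction t with
  | zero => simp [stateDist]
  | succ t ih =>
    rw [pow_succ, ← Matrix.vecMul_vecMul, ← ih]
    funext s'
    simp only [stateDist, policyMatrix, Matrix.vecMul, dotProduct, Matrix.of_apply, mul_sum,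
      mul_assoc]

theorem expReward_diracD (K : GS → GA → GS → ℝ) (p R : GS → GA → ℝ) (s : GS) (t : ℕ) :
    expReward K p R (diracD s) t = (policyMatrix K p ^ t *ᵥ policyReward p R) s := by
  have hdirac : (diracD s : GS → ℝ) = Pi.single s 1 := by
    funext s'
    simp only [diracD, Pi.single_apply]
  calc expReward K p R (diracD s) t
      = stateDist K p (diracD s) t ⬝ᵥ policyReward p R := by
        simp only [expReward, policyReward, dotProduct, mul_sum, mul_assoc]
    _ = diracD s ⬝ᵥ policyMatrix K p ^ t *ᵥ policyReward p R := by
        rw [stateDist_eq_vecMul, Matrix.dotProduct_mulVec]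
    _ = (policyMatrix K p ^ t *ᵥ policyReward p R) s := by
        rw [hdirac, single_one_dotProduct]

theorem valueV_eq_tsum (γ : ℝ) (K : GS → GA → GS → ℝ) (p R : GS → GA → ℝ) (s : GS) :
    valueV γ K p R s = ∑' t : ℕ, γ ^ t * (policyMatrix K p ^ t *ᵥ policyReward p R) s := by
  simp only [valueV, valueD, expReward_diracD]

theorem norm_discounted_reward_le (hK : ∀ s a, K s a ∈ stdSimplex ℝ GS)
    (hp : ∀ s, p s ∈ stdSimplex ℝ GA) (hγ0 : 0 ≤ γ) (R : GS → GA → ℝ) (s : GS) (t : ℕ) :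
    ‖γ ^ t * (policyMatrix K p ^ t *ᵥ policyReward p R) s‖ ≤ γ ^ t * ‖R‖ := by
  rw [norm_mul, Real.norm_of_nonneg (pow_nonneg hγ0 t)]
  refine mul_le_mul_of_nonneg_left ?_ (pow_nonneg hγ0 t)
  calc ‖(policyMatrix K p ^ t *ᵥ policyReward p R) s‖
      ≤ ‖policyMatrix K p ^ t *ᵥ policyReward p R‖ := norm_le_pi_norm _ s
    _ ≤ ‖policyReward p R‖ := norm_mulVec_le_of_mem_rowStochastic
        (pow_mem (policyMatrix_mem_rowStochastic hK hp) t) _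
    _ ≤ ‖R‖ := norm_policyReward_le hp R

theorem norm_valueV_le (hK : ∀ s a, K s a ∈ stdSimplex ℝ GS)
    (hp : ∀ s, p s ∈ stdSimplex ℝ GA) (hγ0 : 0 ≤ γ) (hγ1 : γ < 1) (R : GS → GA → ℝ) :
    ‖valueV γ K p R‖ ≤ ‖R‖ / (1 - γ) := by
  have : 0 ≤ 1 - γ := by linarith
  refine (pi_norm_le_iff_of_nonneg (by positivity)).2 fun s => ?_
  rw [valueV_eq_tsum, div_eq_inv_mul]
  exact tsum_of_norm_bounded ((hasSum_geometric_of_lt_one hγ0 hγ1).mul_right ‖R‖)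
    (norm_discounted_reward_le hK hp hγ0 R s)

theorem valueV_eq_policyReward_add (hK : ∀ s a, K s a ∈ stdSimplex ℝ GS)
    (hp : ∀ s, p s ∈ stdSimplex ℝ GA) (hγ0 : 0 ≤ γ) (hγ1 : γ < 1) (R : GS → GA → ℝ) :
    valueV γ K p R = policyReward p R + γ • policyMatrix K p *ᵥ valueV γ K p R := by
  have hsum (s : GS) :
      Summable fun t : ℕ => γ ^ t * (policyMatrix K p ^ t *ᵥ policyReward p R) s :=
    .of_norm_bounded ((summable_geometric_of_lt_one hγ0 hγ1).mul_right ‖R‖)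
      (norm_discounted_reward_le hK hp hγ0 R s)
  have hstep (s : GS) (t : ℕ) :
      γ ^ (t + 1) * (policyMatrix K p ^ (t + 1) *ᵥ policyReward p R) s =
        γ * ∑ s', policyMatrix K p s s' *
          (γ ^ t * (policyMatrix K p ^ t *ᵥ policyReward p R) s') := by
    rw [pow_succ' (policyMatrix K p), ← Matrix.mulVec_mulVec, Matrix.mulVec, dotProduct, mul_sum,
      mul_sum]
    exact sum_congr rfl fun s' _ => by ring
  funext s
  rw [valueV_eq_tsum, (hsum s).tsum_eq_zero_add]
  simp only [hstep, tsum_mul_left, pow_zero, one_mul, Matrix.one_mulVec,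
    Summable.tsum_finsetSum fun s' _ => (hsum s').mul_left (policyMatrix K p s s'),
    ← valueV_eq_tsum]
  rfl

theorem eq_valueV_of_eq_policyReward_add (hK : ∀ s a, K s a ∈ stdSimplex ℝ GS)
    (hp : ∀ s, p s ∈ stdSimplex ℝ GA) (hγ0 : 0 ≤ γ) (hγ1 : γ < 1) {R : GS → GA → ℝ}
    {X : GS → ℝ} (hX : X = policyReward p R + γ • policyMatrix K p *ᵥ X) :
    X = valueV γ K p R := by
  set d := X - valueV γ K p R with hd
  have hfix : d = γ • policyMatrix K p *ᵥ d := by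
    rw [hd, Matrix.mulVec_sub, smul_sub]
    nth_rw 1 [hX, valueV_eq_policyReward_add hK hp hγ0 hγ1 R]
    abel
  have hcontr : ‖d‖ ≤ γ * ‖d‖ :=
    calc ‖d‖ = γ * ‖policyMatrix K p *ᵥ d‖ := by
          nth_rw 1 [hfix, norm_smul, Real.norm_of_nonneg hγ0]
      _ ≤ γ * ‖d‖ := by
          gcongr
          exact norm_mulVec_le_of_mem_rowStochastic (policyMatrix_mem_rowStochastic hK hp) d
  have hzero : ‖d‖ = 0 := by nlinarith [norm_nonneg d]
  exact sub_eq_zero.1 (norm_eq_zero.1 hzero)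

theorem isLinearMap_valueV (hK : ∀ s a, K s a ∈ stdSimplex ℝ GS)
    (hp : ∀ s, p s ∈ stdSimplex ℝ GA) (hγ0 : 0 ≤ γ) (hγ1 : γ < 1) :
    IsLinearMap ℝ (valueV γ K p) where
  map_add R₁ R₂ := by
    refine (eq_valueV_of_eq_policyReward_add hK hp hγ0 hγ1 ?_).symm
    have hreward : policyReward p (R₁ + R₂) = policyReward p R₁ + policyReward p R₂ :=
      funext fun s => dotProduct_add (p s) (R₁ s) (R₂ s)
    nth_rw 1 [hreward, valueV_eq_policyReward_add hK hp hγ0 hγ1 R₁,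
      valueV_eq_policyReward_add hK hp hγ0 hγ1 R₂]
    rw [Matrix.mulVec_add, smul_add]
    abel
  map_smul c R := by
    refine (eq_valueV_of_eq_policyReward_add hK hp hγ0 hγ1 ?_).symm
    have hreward : policyReward p (c • R) = c • policyReward p R :=
      funext fun s => dotProduct_smul c (p s) (R s)
    nth_rw 1 [hreward, valueV_eq_policyReward_add hK hp hγ0 hγ1 R]
    rw [Matrix.mulVec_smul, smul_add, smul_comm c γ]

theorem norm_valueQ_le (hK : ∀ s a, K s a ∈ stdSimplex ℝ GS)
    (hp : ∀ s, p s ∈ stdSimplex ℝ GA) (hγ0 : 0 ≤ γ) (hγ1 : γ < 1) (R : GS → GA → ℝ) :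
    ‖valueQ γ K p R‖ ≤ ‖R‖ / (1 - γ) := by
  have : 0 < 1 - γ := by linarith
  have hbound : 0 ≤ ‖R‖ / (1 - γ) := by positivity
  refine (pi_norm_le_iff_of_nonneg hbound).2 fun s =>
    (pi_norm_le_iff_of_nonneg hbound).2 fun a => ?_
  calc ‖valueQ γ K p R s a‖
      ≤ ‖R s a‖ + ‖γ * K s a ⬝ᵥ valueV γ K p R‖ := norm_add_le _ _
    _ ≤ ‖R‖ + γ * (‖R‖ / (1 - γ)) := by
        rw [norm_mul, Real.norm_of_nonneg hγ0]
        gcongr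
        · exact (norm_le_pi_norm (R s) a).trans (norm_le_pi_norm R s)
        · exact (abs_dotProduct_le_norm (hK s a) _).trans (norm_valueV_le hK hp hγ0 hγ1 R)
    _ = ‖R‖ / (1 - γ) := by field_simp; ring

theorem dotProduct_valueQ (γ : ℝ) (K : GS → GA → GS → ℝ) (p q R : GS → GA → ℝ) (s : GS) :
    q s ⬝ᵥ valueQ γ K p R s =
      (policyReward q R + γ • policyMatrix K q *ᵥ valueV γ K p R) s := by
  rw [Pi.add_apply, Pi.smul_apply, policyMatrix_mulVec, ← dotProduct_smul]
  exact dotProduct_add (q s) _ _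

theorem policyReward_of_action_independent {S : Type*} {p : S → GA → ℝ}
    (hp : ∀ s, p s ∈ stdSimplex ℝ GA) (f : S → ℝ) :
    (policyReward p fun s _ => f s) = f := by
  funext s
  rw [policyReward, dotProduct, ← sum_mul, (hp s).2, one_mul]

/-- The performance difference lemma: the left-hand side satisfies the Bellman equation of `p'`. -/
theorem valueV_sub_valueV (hK : ∀ s a, K s a ∈ stdSimplex ℝ GS)
    (hp : ∀ s, p s ∈ stdSimplex ℝ GA) (hp' : ∀ s, p' s ∈ stdSimplex ℝ GA)
    (hγ0 : 0 ≤ γ) (hγ1 : γ < 1) (R : GS → GA → ℝ) :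
    valueV γ K p' R - valueV γ K p R =
      valueV γ K p' fun s _ => (p' s - p s) ⬝ᵥ valueQ γ K p R s := by
  refine eq_valueV_of_eq_policyReward_add hK hp' hγ0 hγ1 ?_
  have hreward : (policyReward p' fun s _ => (p' s - p s) ⬝ᵥ valueQ γ K p R s) =
      policyReward p' R + γ • policyMatrix K p' *ᵥ valueV γ K p R - valueV γ K p R := by
    rw [policyReward_of_action_independent hp']
    funext s
    rw [sub_dotProduct, dotProduct_valueQ, dotProduct_valueQ,
      ← valueV_eq_policyReward_add hK hp hγ0 hγ1 R, Pi.sub_apply]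
  rw [hreward, Matrix.mulVec_sub, smul_sub]
  nth_rw 1 [valueV_eq_policyReward_add hK hp' hγ0 hγ1 R]
  abel

theorem norm_action_independent_le {f : GS → ℝ} {c : ℝ} (hc : 0 ≤ c) (hf : ∀ s, |f s| ≤ c) :
    ‖fun (s : GS) (_ : GA) => f s‖ ≤ c :=
  (pi_norm_le_iff_of_nonneg hc).2 fun s => (pi_norm_le_iff_of_nonneg hc).2 fun _ => hf s

theorem norm_dotProduct_valueQ_le (hK : ∀ s a, K s a ∈ stdSimplex ℝ GS)
    (hp : ∀ s, p s ∈ stdSimplex ℝ GA) (hγ0 : 0 ≤ γ) (hγ1 : γ < 1) (R : GS → GA → ℝ)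
    {δ : GS → GA → ℝ} {e : ℝ} (he : 0 ≤ e) (hδ : ∀ s g, |δ s ⬝ᵥ g| ≤ e * ‖g‖) :
    ‖fun (s : GS) (_ : GA) => δ s ⬝ᵥ valueQ γ K p R s‖ ≤ e * (‖R‖ / (1 - γ)) := by
  have : 0 ≤ 1 - γ := by linarith
  refine norm_action_independent_le (by positivity) fun s => (hδ s _).trans ?_
  gcongr
  exact (norm_le_pi_norm _ s).trans (norm_valueQ_le hK hp hγ0 hγ1 R)

theorem norm_valueV_sub_valueV_le (hK : ∀ s a, K s a ∈ stdSimplex ℝ GS)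
    (hp : ∀ s, p s ∈ stdSimplex ℝ GA) (hp' : ∀ s, p' s ∈ stdSimplex ℝ GA)
    (hγ0 : 0 ≤ γ) (hγ1 : γ < 1) (R : GS → GA → ℝ) {e : ℝ} (he : 0 ≤ e)
    (hpp' : ∀ s g, |(p' s - p s) ⬝ᵥ g| ≤ e * ‖g‖) :
    ‖valueV γ K p' R - valueV γ K p R‖ ≤ e * ‖R‖ / (1 - γ) ^ 2 := by
  have : 0 < 1 - γ := by linarith
  rw [valueV_sub_valueV hK hp hp' hγ0 hγ1 R]
  calc _ ≤ _ / (1 - γ) := norm_valueV_le hK hp' hγ0 hγ1 _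
    _ ≤ e * (‖R‖ / (1 - γ)) / (1 - γ) := by
        gcongr
        exact norm_dotProduct_valueQ_le hK hp hγ0 hγ1 R he hpp'
    _ = e * ‖R‖ / (1 - γ) ^ 2 := by field_simp

theorem norm_valueV_sub_valueV_sub_le (hK : ∀ s a, K s a ∈ stdSimplex ℝ GS)
    (hp : ∀ s, p s ∈ stdSimplex ℝ GA) (hp' : ∀ s, p' s ∈ stdSimplex ℝ GA)
    (hγ0 : 0 ≤ γ) (hγ1 : γ < 1) (R : GS → GA → ℝ) {e ε : ℝ} (he : 0 ≤ e) (hε : 0 ≤ ε)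
    (hpp' : ∀ s g, |(p' s - p s) ⬝ᵥ g| ≤ e * ‖g‖) {d : GS → ℝ}
    (hd : ∀ s, |(p' s - p s) ⬝ᵥ valueQ γ K p R s - d s| ≤ ε) :
    ‖valueV γ K p' R - valueV γ K p R - valueV γ K p fun s _ => d s‖ ≤
      ε / (1 - γ) + e ^ 2 * ‖R‖ / (1 - γ) ^ 3 := by
  have : 0 < 1 - γ := by linarith
  set gain : GS → GA → ℝ := fun s _ => (p' s - p s) ⬝ᵥ valueQ γ K p R s
  have hgain : ‖gain‖ ≤ e * (‖R‖ / (1 - γ)) :=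
    norm_dotProduct_valueQ_le hK hp hγ0 hγ1 R he hpp'
  have hsplit : valueV γ K p' R - valueV γ K p R - valueV γ K p (fun s _ => d s) =
      valueV γ K p (gain - fun s _ => d s) + (valueV γ K p' gain - valueV γ K p gain) := by
    rw [valueV_sub_valueV hK hp hp' hγ0 hγ1 R, (isLinearMap_valueV hK hp hγ0 hγ1).map_sub]
    abel
  rw [hsplit]
  refine (norm_add_le _ _).trans (add_le_add ?_ ?_)
  · refine (norm_valueV_le hK hp hγ0 hγ1 _).trans ?_
    gcongr
    exact norm_action_independent_le (f := fun s => (p' s - p s) ⬝ᵥ valueQ γ K p R s - d s) hε hd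
  · calc _ ≤ e * ‖gain‖ / (1 - γ) ^ 2 :=
          norm_valueV_sub_valueV_le hK hp hp' hγ0 hγ1 gain he hpp'
      _ ≤ e * (e * (‖R‖ / (1 - γ))) / (1 - γ) ^ 2 := by gcongr
      _ = e ^ 2 * ‖R‖ / (1 - γ) ^ 3 := by field_simp

end MarkovDecisionProcess

section Softmax

variable {S A : Type*} [Fintype A]

theorem softmaxPol_dotProduct (θ : S → A → ℝ) (s : S) (g : A → ℝ) :
    softmaxPol θ s ⬝ᵥ g = (∑ a, Real.exp (θ s a) * g a) / ∑ a, Real.exp (θ s a) := by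
  simp only [dotProduct, softmaxPol, sum_div, div_mul_eq_mul_div]

variable [Nonempty A]

theorem sum_exp_pos (x : A → ℝ) : 0 < ∑ a, Real.exp (x a) :=
  sum_pos (fun a _ => Real.exp_pos (x a)) univ_nonempty

theorem softmaxPol_mem_stdSimplex (θ : S → A → ℝ) (s : S) :
    softmaxPol θ s ∈ stdSimplex ℝ A := by
  refine ⟨fun a => div_nonneg (Real.exp_pos _).le (sum_exp_pos _).le, ?_⟩
  simp only [softmaxPol]
  rw [← sum_div, div_self (sum_exp_pos _).ne']

theorem hasDerivAt_softmaxPol_dotProduct (θ u : S → A → ℝ) (s : S) (g : A → ℝ) (t : ℝ) :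
    HasDerivAt (fun t : ℝ => softmaxPol (θ + t • u) s ⬝ᵥ g)
      (weightedCov (softmaxPol (θ + t • u) s) (u s) g) t := by
  have hexp (a : A) : HasDerivAt (fun t : ℝ => Real.exp ((θ + t • u) s a))
      (Real.exp ((θ + t • u) s a) * u s a) t := by
    refine HasDerivAt.exp ?_
    simpa using ((hasDerivAt_id t).mul_const (u s a)).const_add (θ s a)
  have hnum : HasDerivAt (fun t : ℝ => ∑ a, Real.exp ((θ + t • u) s a) * g a)
      (∑ a, Real.exp ((θ + t • u) s a) * u s a * g a) t :=
    .fun_sum fun a _ => (hexp a).mul_const (g a)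
  have hden : HasDerivAt (fun t : ℝ => ∑ a, Real.exp ((θ + t • u) s a))
      (∑ a, Real.exp ((θ + t • u) s a) * u s a) t :=
    .fun_sum fun a _ => hexp a
  have hZ := (sum_exp_pos ((θ + t • u) s)).ne'
  simp only [weightedCov, softmaxPol_dotProduct, Pi.mul_apply, ← mul_assoc]
  refine (hnum.fun_div hden hZ).congr_deriv ?_
  field_simp

theorem abs_softmaxPol_sub_dotProduct_le (θ u : S → A → ℝ) (s : S) (g : A → ℝ) :
    |(softmaxPol (θ + u) s - softmaxPol θ s) ⬝ᵥ g| ≤ 2 * ‖u s‖ * ‖g‖ := by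
  have hmvt := norm_image_sub_le_of_norm_deriv_le_segment_01'
    (fun t _ => (hasDerivAt_softmaxPol_dotProduct θ u s g t).hasDerivWithinAt)
    (fun t _ => abs_weightedCov_le (softmaxPol_mem_stdSimplex _ s) (u s) g)
  rw [sub_dotProduct]
  simpa using hmvt

theorem abs_softmaxPol_sub_dotProduct_sub_weightedCov_le (θ u : S → A → ℝ) (s : S)
    (g : A → ℝ) :
    |(softmaxPol (θ + u) s - softmaxPol θ s) ⬝ᵥ g - weightedCov (softmaxPol θ s) (u s) g| ≤
      6 * ‖u s‖ ^ 2 * ‖g‖ := by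
  set c := weightedCov (softmaxPol θ s) (u s) g
  have hderiv (t : ℝ) : HasDerivAt (fun t : ℝ => softmaxPol (θ + t • u) s ⬝ᵥ g - t * c)
      (weightedCov (softmaxPol (θ + t • u) s) (u s) g - c) t := by
    simpa using (hasDerivAt_softmaxPol_dotProduct θ u s g t).fun_sub
      ((hasDerivAt_id t).mul_const c)
  have hbound (t : ℝ) (ht : t ∈ Set.Ico (0 : ℝ) 1) :
      ‖weightedCov (softmaxPol (θ + t • u) s) (u s) g - c‖ ≤ 6 * ‖u s‖ ^ 2 * ‖g‖ := by
    have hpol (h : A → ℝ) :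
        |(softmaxPol (θ + t • u) s - softmaxPol θ s) ⬝ᵥ h| ≤ 2 * ‖u s‖ * ‖h‖ := by
      refine (abs_softmaxPol_sub_dotProduct_le θ (t • u) s h).trans ?_
      gcongr
      rw [Pi.smul_apply, norm_smul, Real.norm_of_nonneg ht.1]
      exact mul_le_of_le_one_left (norm_nonneg _) ht.2.le
    refine (abs_weightedCov_sub_weightedCov_le (softmaxPol_mem_stdSimplex θ s)
      (softmaxPol_mem_stdSimplex _ s) (by positivity) hpol (u s) g).trans_eq ?_
    ring
  have hmvt := norm_image_sub_le_of_norm_deriv_le_segment_01'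
    (fun t _ => (hderiv t).hasDerivWithinAt) hbound
  rw [sub_dotProduct, sub_right_comm]
  simpa using hmvt

end Softmax

section TabularSoftmax

variable {GS GA : Type*} [Fintype GS] [Fintype GA]

/-- Candidate for the derivative at `θ`, in the direction `u`, of the value function of the
softmax policy, given by the policy gradient theorem. -/
noncomputable def softmaxPolicyGradient (γ : ℝ) (K : GS → GA → GS → ℝ) (R θ u : GS → GA → ℝ) :
    GS → ℝ :=
  valueV γ K (softmaxPol θ) fun s _ =>
    weightedCov (softmaxPol θ s) (u s) (valueQ γ K (softmaxPol θ) R s)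

variable [Nonempty GA] {K : GS → GA → GS → ℝ} {γ : ℝ}

theorem isLinearMap_softmaxPolicyGradient (hK : ∀ s a, K s a ∈ stdSimplex ℝ GS) (hγ0 : 0 ≤ γ)
    (hγ1 : γ < 1) (R θ : GS → GA → ℝ) : IsLinearMap ℝ (softmaxPolicyGradient γ K R θ) where
  map_add u₁ u₂ := by
    simp only [softmaxPolicyGradient, Pi.add_apply, (isLinearMap_weightedCov _ _).map_add]
    exact (isLinearMap_valueV hK (softmaxPol_mem_stdSimplex θ) hγ0 hγ1).map_add _ _
  map_smul c u := by
    simp only [softmaxPolicyGradient, Pi.smul_apply, (isLinearMap_weightedCov _ _).map_smul]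
    exact (isLinearMap_valueV hK (softmaxPol_mem_stdSimplex θ) hγ0 hγ1).map_smul c _

theorem norm_valueV_softmaxPol_sub_sub_le (hK : ∀ s a, K s a ∈ stdSimplex ℝ GS) (hγ0 : 0 ≤ γ)
    (hγ1 : γ < 1) (R θ u : GS → GA → ℝ) :
    ‖valueV γ K (softmaxPol (θ + u)) R - valueV γ K (softmaxPol θ) R -
        softmaxPolicyGradient γ K R θ u‖ ≤ 10 * ‖R‖ / (1 - γ) ^ 3 * ‖u‖ ^ 2 := by
  have : 0 < 1 - γ := by linarith
  have hfirst (s : GS) (g : GA → ℝ) :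
      |(softmaxPol (θ + u) s - softmaxPol θ s) ⬝ᵥ g| ≤ 2 * ‖u‖ * ‖g‖ := by
    refine (abs_softmaxPol_sub_dotProduct_le θ u s g).trans ?_
    gcongr
    exact norm_le_pi_norm u s
  have hsecond (s : GS) :
      |(softmaxPol (θ + u) s - softmaxPol θ s) ⬝ᵥ valueQ γ K (softmaxPol θ) R s -
        weightedCov (softmaxPol θ s) (u s) (valueQ γ K (softmaxPol θ) R s)| ≤
      6 * ‖u‖ ^ 2 * (‖R‖ / (1 - γ)) := by
    refine (abs_softmaxPol_sub_dotProduct_sub_weightedCov_le θ u s _).trans ?_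
    gcongr
    · exact norm_le_pi_norm u s
    · exact (norm_le_pi_norm _ s).trans
        (norm_valueQ_le hK (softmaxPol_mem_stdSimplex θ) hγ0 hγ1 R)
  calc _ ≤ 6 * ‖u‖ ^ 2 * (‖R‖ / (1 - γ)) / (1 - γ) + (2 * ‖u‖) ^ 2 * ‖R‖ / (1 - γ) ^ 3 :=
        norm_valueV_sub_valueV_sub_le hK (softmaxPol_mem_stdSimplex θ)
          (softmaxPol_mem_stdSimplex _) hγ0 hγ1 R (by positivity) (by positivity) hfirst hsecond
    _ = (6 * (1 - γ) + 4) * ‖R‖ / (1 - γ) ^ 3 * ‖u‖ ^ 2 := by field_simp; ring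
    _ ≤ 10 * ‖R‖ / (1 - γ) ^ 3 * ‖u‖ ^ 2 := by gcongr; linarith

theorem valueV_softmaxPol_smooth (hK : ∀ s a, K s a ∈ stdSimplex ℝ GS) (hγ0 : 0 ≤ γ)
    (hγ1 : γ < 1) (R θ : GS → GA → ℝ) (s : GS) :
    DifferentiableAt ℝ (fun ϑ => valueV γ K (softmaxPol ϑ) R s) θ ∧
    ∀ θ', |valueV γ K (softmaxPol θ) R s - valueV γ K (softmaxPol θ') R s -
        fderiv ℝ (fun ϑ => valueV γ K (softmaxPol ϑ) R s) θ (θ - θ')| ≤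
      10 * ‖R‖ / (1 - γ) ^ 3 * ‖θ - θ'‖ ^ 2 := by
  let grad : (GS → GA → ℝ) →L[ℝ] ℝ := (LinearMap.proj s ∘ₗ
    (isLinearMap_softmaxPolicyGradient hK hγ0 hγ1 R θ).mk').toContinuousLinearMap
  have hremainder (θ' : GS → GA → ℝ) :
      |valueV γ K (softmaxPol θ') R s - valueV γ K (softmaxPol θ) R s - grad (θ' - θ)| ≤
        10 * ‖R‖ / (1 - γ) ^ 3 * ‖θ' - θ‖ ^ 2 := by
    have h := norm_valueV_softmaxPol_sub_sub_le hK hγ0 hγ1 R θ (θ' - θ)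
    rw [add_sub_cancel] at h
    exact (norm_le_pi_norm _ s).trans h
  have hderiv : HasFDerivAt (fun ϑ => valueV γ K (softmaxPol ϑ) R s) grad θ :=
    hasFDerivAt_of_norm_sub_le_sq hremainder
  refine ⟨hderiv.differentiableAt, fun θ' => ?_⟩
  rw [hderiv.fderiv, ← neg_sub θ' θ, map_neg, norm_neg, ← abs_neg]
  convert hremainder θ' using 2
  ring

end TabularSoftmax

section MultiAgent

section AgentIndex

variable {ι : Type*} [Fintype ι] {S A : ι → Type*}

theorem prod_mem_stdSimplex [DecidableEq ι] {T : ι → Type*} [∀ n, Fintype (T n)] {p : ∀ n, T n → ℝ}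
    (hp : ∀ n, p n ∈ stdSimplex ℝ (T n)) :
    (fun x : ∀ n, T n => ∏ n, p n (x n)) ∈ stdSimplex ℝ (∀ n, T n) := by
  refine ⟨fun x => prod_nonneg fun n _ => (hp n).1 (x n), ?_⟩
  rw [← Fintype.prod_sum]
  exact prod_eq_one fun n _ => (hp n).2

/-- The logits `∑ₙ θₙ(sₙ, aₙ)` of the global policy. -/
noncomputable def jointLogits : (∀ n, S n → A n → ℝ) →ₗ[ℝ] (∀ n, S n) → (∀ n, A n) → ℝ where
  toFun θ s a := ∑ n, θ n (s n) (a n)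
  map_add' θ θ' := by ext s a; exact sum_add_distrib
  map_smul' c θ := by ext s a; exact (mul_sum _ _ _).symm

theorem norm_jointLogits_le [DecidableEq ι] [∀ n, Fintype (S n)] [∀ n, Fintype (A n)]
    (u : ∀ n, S n → A n → ℝ) : ‖jointLogits u‖ ≤ ∑ n, ‖u n‖ := by
  have hsum : 0 ≤ ∑ n, ‖u n‖ := sum_nonneg fun n _ => norm_nonneg (u n)
  refine (pi_norm_le_iff_of_nonneg hsum).2 fun s => (pi_norm_le_iff_of_nonneg hsum).2 fun a => ?_
  exact norm_sum_le_of_le univ fun n _ =>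
    (norm_le_pi_norm (u n (s n)) (a n)).trans (norm_le_pi_norm (u n) (s n))

theorem norm_average_le_one {X Y : Type*} [Fintype X] [Fintype Y] {r : ι → X → Y → ℝ}
    (hr0 : ∀ n x y, 0 ≤ r n x y) (hr1 : ∀ n x y, r n x y ≤ 1) :
    ‖fun x y => (Fintype.card ι : ℝ)⁻¹ * ∑ n, r n x y‖ ≤ 1 := by
  refine (pi_norm_le_iff_of_nonneg zero_le_one).2 fun x =>
    (pi_norm_le_iff_of_nonneg zero_le_one).2 fun y => ?_
  have hsum : ∑ n, r n x y ≤ Fintype.card ι := by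
    simpa using sum_le_card_nsmul univ (fun n => r n x y) 1 fun n _ => hr1 n x y
  rw [Real.norm_of_nonneg (mul_nonneg (by positivity) (sum_nonneg fun n _ => hr0 n x y)),
    inv_mul_eq_div]
  exact div_le_one_of_le₀ hsum (Nat.cast_nonneg _)

end AgentIndex

variable {N : ℕ} {S A : Fin N → Type*}

theorem gKernel_mem_stdSimplex [∀ n, Fintype (S n)] {P : ∀ n, S n → A n → S n → ℝ}
    (hP0 : ∀ n sn an s'n, 0 ≤ P n sn an s'n) (hP1 : ∀ n sn an, ∑ s'n, P n sn an s'n = 1)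
    (s : ∀ n, S n) (a : ∀ n, A n) : gKernel P s a ∈ stdSimplex ℝ (∀ n, S n) :=
  prod_mem_stdSimplex fun n => ⟨hP0 n (s n) (a n), hP1 n (s n) (a n)⟩

theorem gPolicy_eq_softmaxPol_jointLogits [∀ n, Fintype (A n)] (θ : ∀ n, S n → A n → ℝ) :
    gPolicy θ = softmaxPol (jointLogits θ) := by
  funext s a
  simp only [gPolicy, softmaxPol, jointLogits, LinearMap.coe_mk, AddHom.coe_mk, Real.exp_sum,
    prod_div_distrib, Fintype.prod_sum]

variable [∀ n, Fintype (S n)] [∀ n, Fintype (A n)]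

theorem norm_apply_le_eucNorm (u : ∀ n, S n → A n → ℝ) (n : Fin N) : ‖u n‖ ≤ eucNorm u := by
  refine (pi_norm_le_iff_of_nonneg (Real.sqrt_nonneg _)).2 fun s =>
    (pi_norm_le_iff_of_nonneg (Real.sqrt_nonneg _)).2 fun a => Real.abs_le_sqrt ?_
  calc u n s a ^ 2 ≤ ∑ a, u n s a ^ 2 :=
        single_le_sum (f := fun a => u n s a ^ 2) (fun _ _ => by positivity) (mem_univ a)
    _ ≤ ∑ s, ∑ a, u n s a ^ 2 :=
        single_le_sum (f := fun s => ∑ a, u n s a ^ 2) (fun _ _ => by positivity) (mem_univ s)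
    _ ≤ sqNorm u :=
        single_le_sum (f := fun n => ∑ s, ∑ a, u n s a ^ 2) (fun _ _ => by positivity)
          (mem_univ n)

theorem sum_norm_le_mul_eucNorm (u : ∀ n, S n → A n → ℝ) : ∑ n, ‖u n‖ ≤ N * eucNorm u := by
  simpa using sum_le_card_nsmul univ (fun n => ‖u n‖) _ fun n _ => norm_apply_le_eucNorm u n

theorem smoothness_bound_le {γ c : ℝ} (hγ1 : γ < 1) (hc : c ≤ 1) (u : ∀ n, S n → A n → ℝ) :
    10 * c / (1 - γ) ^ 3 * (∑ n, ‖u n‖) ^ 2 ≤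
      24 * (N : ℝ) ^ 2 / (1 - γ) ^ 3 * eucNorm u ^ 2 := by
  have : 0 < 1 - γ := sub_pos.2 hγ1
  calc 10 * c / (1 - γ) ^ 3 * (∑ n, ‖u n‖) ^ 2
      ≤ 24 / (1 - γ) ^ 3 * (N * eucNorm u) ^ 2 := by
        gcongr
        · linarith
        · exact sum_norm_le_mul_eucNorm u
    _ = 24 * (N : ℝ) ^ 2 / (1 - γ) ^ 3 * eucNorm u ^ 2 := by ring

theorem value_function_smoothness_general [∀ n, Nonempty (A n)]
    {K : (∀ n, S n) → (∀ n, A n) → (∀ n, S n) → ℝ} (hK : ∀ s a, K s a ∈ stdSimplex ℝ (∀ n, S n))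
    {γ : ℝ} (hγ0 : 0 ≤ γ) (hγ1 : γ < 1) (R : (∀ n, S n) → (∀ n, A n) → ℝ)
    (θ θ' : ∀ n, S n → A n → ℝ) (s : ∀ n, S n) :
    DifferentiableAt ℝ
      (fun ϑ : ∀ n, S n → A n → ℝ => valueV γ K (gPolicy ϑ) R s) θ ∧
    |valueV γ K (gPolicy θ) R s - valueV γ K (gPolicy θ') R s -
        fderiv ℝ (fun ϑ : ∀ n, S n → A n → ℝ => valueV γ K (gPolicy ϑ) R s) θ (θ - θ')| ≤
      10 * ‖R‖ / (1 - γ) ^ 3 * (∑ n, ‖(θ - θ') n‖) ^ 2 := by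
  have : 0 < 1 - γ := by linarith
  simp only [gPolicy_eq_softmaxPol_jointLogits]
  obtain ⟨hdiff, hsmooth⟩ := valueV_softmaxPol_smooth hK hγ0 hγ1 R (jointLogits θ) s
  have hderiv := hdiff.hasFDerivAt.comp θ jointLogits.toContinuousLinearMap.hasFDerivAt
  refine ⟨hderiv.differentiableAt, ?_⟩
  have hfderiv : fderiv ℝ (fun ϑ => valueV γ K (softmaxPol (jointLogits ϑ)) R s) θ (θ - θ') =
      fderiv ℝ (fun ϑ => valueV γ K (softmaxPol ϑ) R s) (jointLogits θ)
        (jointLogits θ - jointLogits θ') := by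
    rw [← map_sub]
    exact DFunLike.congr_fun hderiv.fderiv (θ - θ')
  rw [hfderiv]
  refine (hsmooth (jointLogits θ')).trans ?_
  gcongr
  rw [← map_sub]
  exact norm_jointLogits_le (θ - θ')

end MultiAgent

/-- Smoothness of the softmax-parameterized value function: for all
parameters `θ, θ'` and every global state `s`,
`|V^{π_θ}(s) − V^{π_{θ'}}(s) − ⟨∇_θ V^{π_θ}(s), θ − θ'⟩| ≤ (24N²/(1−γ)³)‖θ − θ'‖₂²`. -/
theorem value_function_smoothness
    {N : ℕ} (hN : 1 ≤ N)
    {S A : Fin N → Type*}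
    [∀ n, Fintype (S n)] [∀ n, Nonempty (S n)]
    [∀ n, Fintype (A n)] [∀ n, Nonempty (A n)]
    (Nbr : Fin N → Finset (Fin N)) (hNbr : ∀ n, n ∈ Nbr n)
    (r : Fin N → (∀ k, S k) → (∀ k, A k) → ℝ)
    (hr0 : ∀ n s a, 0 ≤ r n s a) (hr1 : ∀ n s a, r n s a ≤ 1)
    (hrloc : ∀ n (s s' : ∀ k, S k) (a a' : ∀ k, A k),
      (∀ k ∈ Nbr n, s k = s' k) → (∀ k ∈ Nbr n, a k = a' k) → r n s a = r n s' a')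
    (P : ∀ n, S n → A n → S n → ℝ)
    (hP0 : ∀ n sn an s'n, 0 ≤ P n sn an s'n)
    (hP1 : ∀ n sn an, ∑ s'n, P n sn an s'n = 1)
    (γ : ℝ) (hγ0 : 0 < γ) (hγ1 : γ < 1)
    (Rg : (∀ k, S k) → (∀ k, A k) → ℝ)
    (hRg : Rg = fun s a => (N : ℝ)⁻¹ * ∑ m, r m s a)
    (θ θ' : ∀ n, S n → A n → ℝ) (s : ∀ k, S k) :
    DifferentiableAt ℝ
      (fun ϑ : ∀ n, S n → A n → ℝ => valueV γ (gKernel P) (gPolicy ϑ) Rg s) θ ∧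
    |valueV γ (gKernel P) (gPolicy θ) Rg s - valueV γ (gKernel P) (gPolicy θ') Rg s -
        fderiv ℝ (fun ϑ : ∀ n, S n → A n → ℝ => valueV γ (gKernel P) (gPolicy ϑ) Rg s) θ
          (θ - θ')|
      ≤ (24 * (N : ℝ) ^ 2 / (1 - γ) ^ 3) * (eucNorm (θ - θ')) ^ 2 := by
  have hgeneral := value_function_smoothness_general (gKernel_mem_stdSimplex hP0 hP1)
    hγ0.le hγ1 Rg θ θ' s
  have hR : ‖Rg‖ ≤ 1 := by simpa [hRg] using norm_average_le_one hr0 hr1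
  exact ⟨hgeneral.1, hgeneral.2.trans (smoothness_bound_le hγ1 hR (θ - θ'))⟩
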